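/- Let s₁, s₂ : ℝ² → (0,∞) and f : ℝ² → ℂ be smooth ℤ²-periodic functions (viewed as functions on [0,1)²). Then there exists a constant C > 0 such that for every N ≥ 1, the operator norm bound ‖Op^{AW,s₁}_N(f) − Op^{AW,s₂}_N(f)‖ ≤ C/N holds on ℂ^N. -/

import Mathlib

open MeasureTheory
open scoped ENNReal

/-- Planck's constant `ℏ = (2πN)⁻¹`. -/
noncomputable def hbar (N : ℕ) : ℝ := 1 / (2 * Real.pi * N)

/-- The plane Gaussian coherent state `Ψ_{x,s}` at `x = (q₀,p₀)` with squeezing `s`. -/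
noncomputable def planeCS (N : ℕ) (x : ℝ × ℝ) (s : ℝ) (q : ℝ) : ℂ :=
  (((s / (Real.pi * hbar N)) ^ ((1 : ℝ) / 4) : ℝ) : ℂ) *
    Complex.exp (-(Complex.I * x.2 * x.1) / (2 * hbar N)) *
    Complex.exp (Complex.I * x.2 * q / hbar N) *
    Complex.exp (-((s : ℂ) * (q - x.1) ^ 2) / (2 * hbar N))

/-- The torus coherent state `ψ_{x,s} ∈ ℂ^N`, with components
`⟨q_j, ψ_{x,s}⟩ = N^{-1/2} Σ_{ν ∈ ℤ} Ψ_{x,s}(j/N + ν)`. -/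
noncomputable def torusCS (N : ℕ) (x : ℝ × ℝ) (s : ℝ) : EuclideanSpace ℂ (Fin N) :=
  (WithLp.equiv 2 (Fin N → ℂ)).symm fun j =>
    (((N : ℝ) ^ (-(1 / 2) : ℝ) : ℝ) : ℂ) *
      ∑' ν : ℤ, planeCS N x s (((j : ℕ) : ℝ) / N + ν)

/-- The rank-one operator `|ψ⟩⟨ψ| : u ↦ ⟨ψ,u⟩ψ`. -/
noncomputable def rankOne {E : Type*} [NormedAddCommGroup E] [InnerProductSpace ℂ E]
    (ψ : E) : E →L[ℂ] E :=
  (innerSL ℂ ψ).smulRight ψ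

/-- The anti-Wick quantization with (position-dependent) squeezing `s`:
`Op^{AW,s}_N(f) = N ∫_{[0,1)²} f(x) |ψ_{x,s(x)}⟩⟨ψ_{x,s(x)}| dx`. -/
noncomputable def opAW (N : ℕ) (s : ℝ × ℝ → ℝ) (f : ℝ × ℝ → ℂ) :
    EuclideanSpace ℂ (Fin N) →L[ℂ] EuclideanSpace ℂ (Fin N) :=
  (N : ℂ) • ∫ x in Set.Ico (0 : ℝ) 1 ×ˢ Set.Ico (0 : ℝ) 1,
    f x • rankOne (torusCS N x (s x))

namespace AW

structure SP (g : ℝ × ℝ → ℂ) : Prop where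
  smooth : ContDiff ℝ (⊤ : ℕ∞) g
  per1 : ∀ q p : ℝ, g (q + 1, p) = g (q, p)
  per2 : ∀ q p : ℝ, g (q, p + 1) = g (q, p)

noncomputable def dV (v : ℝ × ℝ) (g : ℝ × ℝ → ℂ) : ℝ × ℝ → ℂ := fun x => fderiv ℝ g x v

lemma SP.cont {g : ℝ × ℝ → ℂ} (h : SP g) : Continuous g := h.smooth.continuous

lemma SP.mul {g h : ℝ × ℝ → ℂ} (hg : SP g) (hh : SP h) : SP (fun x => g x * h x) :=
  ⟨hg.smooth.mul hh.smooth, fun q p => by rw [hg.per1, hh.per1], fun q p => by rw [hg.per2, hh.per2]⟩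

lemma SP.neg {g : ℝ × ℝ → ℂ} (hg : SP g) : SP (fun x => - g x) :=
  ⟨hg.smooth.neg, fun q p => by rw [hg.per1], fun q p => by rw [hg.per2]⟩

lemma SP.dV {g : ℝ × ℝ → ℂ} (hg : SP g) (v : ℝ × ℝ) : SP (dV v g) := by
  refine ⟨?_, fun q p => ?_, fun q p => ?_⟩
  · unfold AW.dV
    exact (hg.smooth.fderiv_right (m := (⊤ : ℕ∞)) (by simp)).clm_apply contDiff_const
  · unfold AW.dV
    have h : (fun x : ℝ × ℝ => g (x + (1, 0))) = g := by
      funext ⟨a, b⟩; simpa using hg.per1 a b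
    have := fderiv_comp_add_right (𝕜 := ℝ) (f := g) (x := (q, p)) ((1 : ℝ), (0 : ℝ))
    rw [h] at this
    rw [this]; simp
  · unfold AW.dV
    have h : (fun x : ℝ × ℝ => g (x + (0, 1))) = g := by
      funext ⟨a, b⟩; simpa using hg.per2 a b
    have := fderiv_comp_add_right (𝕜 := ℝ) (f := g) (x := (q, p)) ((0 : ℝ), (1 : ℝ))
    rw [h] at this
    rw [this]; simp

lemma SP.bdd {g : ℝ × ℝ → ℂ} (hg : SP g) : ∃ C : ℝ, 0 ≤ C ∧ ∀ x, ‖g x‖ ≤ C := by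
  obtain ⟨C, hC⟩ := ((isCompact_Icc (a := (0 : ℝ)) (b := 1)).prod
    (isCompact_Icc (a := (0 : ℝ)) (b := 1))).exists_bound_of_continuousOn hg.cont.continuousOn
  refine ⟨C, (norm_nonneg _).trans (hC (0, 0) (by simp)), fun x => ?_⟩
  obtain ⟨q, p⟩ := x
  have P1 : ∀ p, Function.Periodic (fun q => g (q, p)) 1 := fun p q => hg.per1 q p
  have P2 : ∀ q, Function.Periodic (fun p => g (q, p)) 1 := fun q p => hg.per2 q p
  obtain ⟨q', hq', e1⟩ := (P1 p).exists_mem_Ico₀ one_pos q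
  obtain ⟨p', hp', e2⟩ := (P2 q').exists_mem_Ico₀ one_pos p
  rw [show g (q, p) = g (q', p) from e1, show g (q', p) = g (q', p') from e2]
  exact hC _ ⟨⟨hq'.1, hq'.2.le⟩, ⟨hp'.1, hp'.2.le⟩⟩

/-- the integrand -/
noncomputable def j (S : ℝ × ℝ → ℂ) (k : ℕ) (g : ℝ × ℝ → ℂ) (τ q p : ℝ) (m : ℤ) : ℂ :=
  (τ : ℂ) ^ k * g (q, p) * Complex.exp (-(τ * S (q, p))) *
    Complex.exp (2 * Real.pi * Complex.I * m * p)

noncomputable def J (S : ℝ × ℝ → ℂ) (k : ℕ) (g : ℝ × ℝ → ℂ) (τ q : ℝ) (m : ℤ) : ℂ :=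
  ∫ p in (0 : ℝ)..1, j S k g τ q p m

lemma hasDeriv_q {g : ℝ × ℝ → ℂ} (hg : SP g) (q p : ℝ) :
    HasDerivAt (fun q => g (q, p)) (dV (1, 0) g (q, p)) q := by
  have h := (hg.smooth.differentiable (by simp)) (q, p)
  have h2 : HasDerivAt (fun q : ℝ => (q, p)) ((1 : ℝ), (0 : ℝ)) q :=
    (hasDerivAt_id q).prodMk (hasDerivAt_const q p)
  exact h.hasFDerivAt.comp_hasDerivAt q h2

lemma hasDeriv_p {g : ℝ × ℝ → ℂ} (hg : SP g) (q p : ℝ) :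
    HasDerivAt (fun p => g (q, p)) (dV (0, 1) g (q, p)) p := by
  have h := (hg.smooth.differentiable (by simp)) (q, p)
  have h2 : HasDerivAt (fun p : ℝ => (q, p)) ((0 : ℝ), (1 : ℝ)) p :=
    (hasDerivAt_const p q).prodMk (hasDerivAt_id p)
  exact h.hasFDerivAt.comp_hasDerivAt p h2

lemma norm_e (m : ℤ) (p : ℝ) : ‖Complex.exp (2 * Real.pi * Complex.I * m * p)‖ = 1 := by
  have : (2 * Real.pi * Complex.I * m * p : ℂ) = ((2 * Real.pi * m * p : ℝ) : ℂ) * Complex.I := by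
    push_cast; ring
  rw [this, Complex.norm_exp_ofReal_mul_I]

lemma norm_j (S : ℝ × ℝ → ℂ) (k : ℕ) (g : ℝ × ℝ → ℂ) {τ : ℝ} (hτ : 0 ≤ τ) (q p : ℝ) (m : ℤ) :
    ‖j S k g τ q p m‖ = τ ^ k * ‖g (q, p)‖ * Real.exp (-(τ * (S (q, p)).re)) := by
  unfold j
  rw [norm_mul, norm_e, mul_one, norm_mul, norm_mul, norm_pow, Complex.norm_real,
    Real.norm_of_nonneg hτ, Complex.norm_exp]
  simp

lemma cont_jc {X : Type*} [TopologicalSpace X] {S g : ℝ × ℝ → ℂ} (hS : SP S) (hg : SP g) (k : ℕ)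
    (m : ℤ) {a b c : X → ℝ} (ha : Continuous a) (hb : Continuous b) (hc : Continuous c) :
    Continuous (fun z => j S k g (a z) (b z) (c z) m) := by
  have h1 := hS.cont.comp (hb.prodMk hc)
  have h2 := hg.cont.comp (hb.prodMk hc)
  simp only [Function.comp_def] at h1 h2
  have h3 := Complex.continuous_ofReal.comp ha
  have h4 := Complex.continuous_ofReal.comp hc
  unfold j
  exact (((h3.pow k).mul h2).mul (h3.mul h1).neg.cexp).mul (continuous_const.mul h4).cexp

lemma cont_j {S g : ℝ × ℝ → ℂ} (hS : SP S) (hg : SP g) (k : ℕ) (m : ℤ) :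
    Continuous (fun z : (ℝ × ℝ) × ℝ => j S k g z.1.1 z.1.2 z.2 m) :=
  cont_jc hS hg k m (by fun_prop) (by fun_prop) (by fun_prop)

lemma cont_j' {S g : ℝ × ℝ → ℂ} (hS : SP S) (hg : SP g) (k : ℕ) (m : ℤ) (τ q : ℝ) :
    Continuous (fun p => j S k g τ q p m) :=
  cont_jc hS hg k m continuous_const continuous_const continuous_id

lemma cont_J {S g : ℝ × ℝ → ℂ} (hS : SP S) (hg : SP g) (k : ℕ) (m : ℤ) :
    Continuous (fun z : ℝ × ℝ => J S k g z.1 z.2 m) := by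
  unfold J
  exact intervalIntegral.continuous_parametric_intervalIntegral_of_continuous'
    (f := fun z : ℝ × ℝ => fun p => j S k g z.1 z.2 p m) (cont_j hS hg k m) 0 1

/-- differentiate under the integral -/
lemma deriv_under (F F' : ℝ → ℝ → ℂ) (hF : Continuous F.uncurry) (hF' : Continuous F'.uncurry)
    (hd : ∀ x t, HasDerivAt (fun x => F x t) (F' x t) x) (x : ℝ) :
    HasDerivAt (fun x => ∫ t in (0 : ℝ)..1, F x t) (∫ t in (0 : ℝ)..1, F' x t) x := by
  obtain ⟨C, hC⟩ := ((isCompact_Icc (a := x - 1) (b := x + 1)).prod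
    (isCompact_Icc (a := (0 : ℝ)) (b := 1))).exists_bound_of_continuousOn hF'.continuousOn
  have c1 : ∀ x, Continuous (F x) := fun x =>
    hF.comp (by fun_prop : Continuous (fun t : ℝ => (x, t)))
  have c2 : ∀ x, Continuous (F' x) := fun x =>
    hF'.comp (by fun_prop : Continuous (fun t : ℝ => (x, t)))
  refine (intervalIntegral.hasDerivAt_integral_of_dominated_loc_of_deriv_le
    (F := F) (F' := F') (s := Set.Icc (x - 1) (x + 1)) (bound := fun _ => C)
    (Icc_mem_nhds (by linarith) (by linarith))
    (Filter.Eventually.of_forall fun y => (c1 y).aestronglyMeasurable)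
    ((c1 x).intervalIntegrable _ _) (c2 x).aestronglyMeasurable
    (Filter.Eventually.of_forall fun t ht y hy => ?_) (by simp)
    (Filter.Eventually.of_forall fun t ht y hy => hd y t)).2
  rw [Set.uIoc_of_le zero_le_one] at ht
  exact hC (y, t) ⟨hy, ht.1.le, ht.2⟩

lemma J_deriv_q {S g : ℝ × ℝ → ℂ} (hS : SP S) (hg : SP g) (k : ℕ) (m : ℤ) (τ q : ℝ) :
    HasDerivAt (fun q => J S k g τ q m)
      (J S k (dV (1, 0) g) τ q m + J S (k + 1) (fun x => - (g x * dV (1, 0) S x)) τ q m) q := by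
  have h1 := hg.dV (1, 0)
  have h2 := (hg.mul (hS.dV (1, 0))).neg
  unfold J
  rw [← intervalIntegral.integral_add ((cont_j' hS h1 k m τ q).intervalIntegrable _ _)
    ((cont_j' hS h2 (k + 1) m τ q).intervalIntegrable _ _)]
  refine deriv_under (fun q p => j S k g τ q p m) (fun q p => j S k (dV (1, 0) g) τ q p m +
    j S (k + 1) (fun x => - (g x * dV (1, 0) S x)) τ q p m) (cont_jc hS hg k m continuous_const continuous_fst continuous_snd)
    ((cont_jc hS h1 k m continuous_const continuous_fst continuous_snd).add
      (cont_jc hS h2 (k + 1) m continuous_const continuous_fst continuous_snd)) (fun q p => ?_) q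
  unfold j
  have e1 := hasDeriv_q hg q p
  have e2 := (((hasDeriv_q hS q p).const_mul (τ : ℂ)).neg).cexp
  refine (((e1.const_mul ((τ : ℂ) ^ k)).mul e2).mul_const _).congr_deriv ?_
  simp only [Pi.neg_apply]
  ring

lemma J_deriv_τ {S g : ℝ × ℝ → ℂ} (hS : SP S) (hg : SP g) (m : ℤ) (τ q : ℝ) :
    HasDerivAt (fun τ => J S 0 g τ q m) (J S 0 (fun x => - (g x * S x)) τ q m) τ := by
  have h2 := (hg.mul hS).neg
  refine deriv_under (fun τ p => j S 0 g τ q p m) (fun τ p => 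
    j S 0 (fun x => - (g x * S x)) τ q p m) (cont_jc hS hg 0 m continuous_fst continuous_const continuous_snd)
    (cont_jc hS h2 0 m continuous_fst continuous_const continuous_snd) (fun τ p => ?_) τ
  unfold j
  have e0 : HasDerivAt (fun τ : ℝ => (τ : ℂ)) 1 τ := Complex.ofRealCLM.hasDerivAt
  have e2 := ((e0.mul_const (S (q, p))).neg).cexp
  simp only [pow_zero, one_mul]
  refine ((e2.const_mul (g (q, p))).mul_const _).congr_deriv ?_
  simp only [Pi.neg_apply]; ring

lemma J_parts {S g : ℝ × ℝ → ℂ} (hS : SP S) (hg : SP g) (k : ℕ) (m : ℤ) (τ q : ℝ) :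
    (2 * Real.pi * Complex.I * m) * J S k g τ q m = - (J S k (dV (0, 1) g) τ q m +
      J S (k + 1) (fun x => - (g x * dV (0, 1) S x)) τ q m) := by
  have h1 := hg.dV (0, 1)
  have h2 := (hg.mul (hS.dV (0, 1))).neg
  unfold J
  rw [← intervalIntegral.integral_add ((cont_j' hS h1 k m τ q).intervalIntegrable _ _)
    ((cont_j' hS h2 (k + 1) m τ q).intervalIntegrable _ _)]
  rw [← intervalIntegral.integral_const_mul]
  set F : ℝ → ℂ := fun p => j S k g τ q p m with hF
  set F' : ℝ → ℂ := fun p => (2 * Real.pi * Complex.I * m) * j S k g τ q p m +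
    (j S k (dV (0, 1) g) τ q p m + j S (k + 1) (fun x => - (g x * dV (0, 1) S x)) τ q p m) with hF'
  have i1 := ((cont_j' hS hg k m τ q).intervalIntegrable (μ := volume) 0 1).const_mul
    (2 * Real.pi * Complex.I * m)
  have i2 := (((cont_j' hS h1 k m τ q).intervalIntegrable (μ := volume) 0 1)).add
    ((cont_j' hS h2 (k + 1) m τ q).intervalIntegrable (μ := volume) 0 1)
  have hder : ∀ p, HasDerivAt F (F' p) p := by
    intro p
    simp only [hF, hF']
    unfold j
    have e1 := hasDeriv_p hg q p
    have e2 := (((hasDeriv_p hS q p).const_mul (τ : ℂ)).neg).cexp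
    have e0 : HasDerivAt (fun p : ℝ => (p : ℂ)) 1 p := Complex.ofRealCLM.hasDerivAt
    have e3 := (e0.const_mul (2 * Real.pi * Complex.I * m)).cexp
    refine (((e1.const_mul ((τ : ℂ) ^ k)).mul e2).mul e3).congr_deriv ?_
    simp only [Pi.neg_apply, Pi.mul_apply]
    ring
  have key := intervalIntegral.integral_eq_sub_of_hasDerivAt (a := 0) (b := 1) (f := F) (f' := F')
    (fun p _ => hder p) (i1.add i2)
  have hb : F 1 - F 0 = 0 := by
    have a1 := hg.per2 q 0
    have a2 := hS.per2 q 0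
    rw [zero_add] at a1 a2
    have a3 : Complex.exp (2 * Real.pi * Complex.I * m) = 1 := by
      rw [Complex.exp_eq_one_iff]; exact ⟨m, by ring⟩
    simp [hF, j, a1, a2, a3]
  rw [hb] at key
  simp only [hF'] at key
  rw [intervalIntegral.integral_add i1 i2] at key
  exact eq_neg_of_add_eq_zero_left key

lemma pow_exp_bound {σ : ℝ} (hσ : 0 < σ) (k : ℕ) {τ : ℝ} (hτ : 0 ≤ τ) :
    τ ^ k * Real.exp (-(τ * (2 * σ))) ≤ (k.factorial / σ ^ k) * Real.exp (-(σ * τ)) := by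
  have h := Real.pow_div_factorial_le_exp (x := σ * τ) (by positivity) k
  have e : Real.exp (-(τ * (2 * σ))) = Real.exp (-(σ * τ)) * Real.exp (-(σ * τ)) := by
    rw [← Real.exp_add]; ring_nf
  rw [e, ← mul_assoc]
  gcongr
  rw [Real.exp_neg, ← div_eq_mul_inv, div_le_iff₀ (Real.exp_pos _)]
  rw [mul_pow] at h
  calc τ ^ k = (k.factorial / σ ^ k) * (σ ^ k * τ ^ k / k.factorial) := by
        field_simp
    _ ≤ _ := by gcongr

lemma J_bound {S : ℝ × ℝ → ℂ} (hS : SP S) {σ : ℝ} (hσ : 0 < σ) (hσS : ∀ x, 2 * σ ≤ (S x).re)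
    (n : ℕ) : ∀ (k : ℕ) (g : ℝ × ℝ → ℂ), SP g → ∃ C : ℝ, 0 ≤ C ∧ ∀ (τ q : ℝ) (m : ℤ), 0 ≤ τ →
      |(m : ℝ)| ^ n * ‖J S k g τ q m‖ ≤ C * Real.exp (-(σ * τ)) := by
  induction n with
  | zero =>
    intro k g hg
    obtain ⟨C, hC0, hC⟩ := hg.bdd
    refine ⟨C * (k.factorial / σ ^ k), by positivity, fun τ q m hτ => ?_⟩
    rw [pow_zero, one_mul]
    unfold J
    refine (intervalIntegral.norm_integral_le_of_norm_le_const
      (C := C * (k.factorial / σ ^ k) * Real.exp (-(σ * τ))) fun p _ => ?_).trans (by simp)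
    rw [norm_j S k g hτ]
    calc τ ^ k * ‖g (q, p)‖ * Real.exp (-(τ * (S (q, p)).re))
        ≤ τ ^ k * C * Real.exp (-(τ * (2 * σ))) := by
          gcongr
          · exact hC _
          · exact hσS _
      _ = C * (τ ^ k * Real.exp (-(τ * (2 * σ)))) := by ring
      _ ≤ C * ((k.factorial / σ ^ k) * Real.exp (-(σ * τ))) := by
          exact mul_le_mul_of_nonneg_left (pow_exp_bound hσ k hτ) hC0
      _ = _ := by ring
  | succ n ih =>
    intro k g hg
    obtain ⟨C1, hC1, h1⟩ := ih k _ (hg.dV (0, 1))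
    obtain ⟨C2, hC2, h2⟩ := ih (k + 1) _ (hg.mul (hS.dV (0, 1))).neg
    refine ⟨C1 + C2, by positivity, fun τ q m hτ => ?_⟩
    have key := congrArg norm (J_parts hS hg k m τ q)
    rw [norm_neg, norm_mul] at key
    have e : ‖(2 * Real.pi * Complex.I * m : ℂ)‖ = 2 * Real.pi * |(m : ℝ)| := by
      simp [abs_of_pos Real.pi_pos]
    rw [e] at key
    have h2π : (1 : ℝ) ≤ 2 * Real.pi := by linarith [Real.pi_gt_three]
    calc |(m : ℝ)| ^ (n + 1) * ‖J S k g τ q m‖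
        = |(m : ℝ)| ^ n * (1 * |(m : ℝ)| * ‖J S k g τ q m‖) := by ring
      _ ≤ |(m : ℝ)| ^ n * (2 * Real.pi * |(m : ℝ)| * ‖J S k g τ q m‖) := by gcongr
      _ ≤ |(m : ℝ)| ^ n * (‖J S k (dV (0, 1) g) τ q m‖ +
          ‖J S (k + 1) (fun x => - (g x * dV (0, 1) S x)) τ q m‖) := by
          rw [key]; gcongr; exact norm_add_le _ _
      _ ≤ _ := by linarith [h1 τ q m hτ, h2 τ q m hτ]

lemma J_bound2 {S : ℝ × ℝ → ℂ} (hS : SP S) {σ : ℝ} (hσ : 0 < σ) (hσS : ∀ x, 2 * σ ≤ (S x).re)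
    (k : ℕ) (g : ℝ × ℝ → ℂ) (hg : SP g) : ∃ C : ℝ, 0 ≤ C ∧ ∀ (τ q : ℝ) (m : ℤ), 0 ≤ τ →
      (1 + (m : ℝ) ^ 2) * ‖J S k g τ q m‖ ≤ C * Real.exp (-(σ * τ)) := by
  obtain ⟨C1, hC1, h1⟩ := J_bound hS hσ hσS 0 k g hg
  obtain ⟨C2, hC2, h2⟩ := J_bound hS hσ hσS 2 k g hg
  refine ⟨C1 + C2, by positivity, fun τ q m hτ => ?_⟩
  have a := h1 τ q m hτ
  have b := h2 τ q m hτ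
  rw [sq_abs] at b
  rw [pow_zero] at a
  linarith

lemma J_bound4 {S : ℝ × ℝ → ℂ} (hS : SP S) {σ : ℝ} (hσ : 0 < σ) (hσS : ∀ x, 2 * σ ≤ (S x).re)
    (k : ℕ) (g : ℝ × ℝ → ℂ) (hg : SP g) : ∃ C : ℝ, 0 ≤ C ∧ ∀ (τ q : ℝ) (m : ℤ), 0 ≤ τ →
      (m : ℝ) ^ 2 * (1 + (m : ℝ) ^ 2) * ‖J S k g τ q m‖ ≤ C := by
  obtain ⟨C1, hC1, h1⟩ := J_bound hS hσ hσS 2 k g hg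
  obtain ⟨C2, hC2, h2⟩ := J_bound hS hσ hσS 4 k g hg
  refine ⟨C1 + C2, by positivity, fun τ q m hτ => ?_⟩
  have a := h1 τ q m hτ
  have b := h2 τ q m hτ
  have e : |(m : ℝ)| ^ 4 = (m : ℝ) ^ 2 * (m : ℝ) ^ 2 := by
    rw [show 4 = 2 * 2 from rfl, pow_mul, sq_abs]; ring
  rw [sq_abs] at a
  rw [e] at b
  have hexp : Real.exp (-(σ * τ)) ≤ 1 := Real.exp_le_one_iff.2 (by nlinarith [mul_nonneg hσ.le hτ])
  have a' := a.trans (mul_le_of_le_one_right hC1 hexp)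
  have b' := b.trans (mul_le_of_le_one_right hC2 hexp)
  linarith

/-- second difference -/
lemma second_diff (h h' h'' : ℝ → ℂ) (hd : ∀ x, HasDerivAt h (h' x) x)
    (hd' : ∀ x, HasDerivAt h' (h'' x) x) (M : ℝ) (hM : ∀ x, ‖h'' x‖ ≤ M) (c u : ℝ) :
    ‖h (c + u) + h (c - u) - 2 * h c‖ ≤ 2 * M * u ^ 2 := by
  have l1 : ∀ x y, ‖h' y - h' x‖ ≤ M * |y - x| := fun x y =>
    convex_univ.norm_image_sub_le_of_norm_hasDerivWithin_le (f := h') (f' := h'')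
      (fun x _ => (hd' x).hasDerivWithinAt) (fun x _ => hM x) (Set.mem_univ x) (Set.mem_univ y)
  have hφ : ∀ v, HasDerivAt (fun v => h (c + v) + h (c - v)) (h' (c + v) - h' (c - v)) v := by
    intro v
    have a := (hd (c + v)).comp_const_add c v
    have b := (hd (c - v)).comp_const_sub c v
    refine (a.add b).congr_deriv (by ring)
  have hM0 : 0 ≤ M := (norm_nonneg _).trans (hM 0)
  have := (convex_uIcc 0 u).norm_image_sub_le_of_norm_hasDerivWithin_le
    (f := fun v => h (c + v) + h (c - v)) (f' := fun v => h' (c + v) - h' (c - v))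
    (C := M * (2 * |u|))
    (fun x _ => (hφ x).hasDerivWithinAt) (fun v hv => by
      refine (l1 _ _).trans ?_
      have : |v| ≤ |u| := by simpa using Set.abs_sub_left_of_mem_uIcc hv
      have e : c + v - (c - v) = 2 * v := by ring
      rw [e, abs_mul, abs_two]
      gcongr) Set.left_mem_uIcc Set.right_mem_uIcc
  simp only [add_zero, sub_zero] at this
  rw [Real.norm_eq_abs] at this
  calc _ = ‖h (c + u) + h (c - u) - (h c + h c)‖ := by ring_nf
    _ ≤ _ := this
    _ = 2 * M * (|u| * |u|) := by ring
    _ = _ := by rw [abs_mul_abs_self]; ring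

lemma J_second {S : ℝ × ℝ → ℂ} (hS : SP S) {σ : ℝ} (hσ : 0 < σ) (hσS : ∀ x, 2 * σ ≤ (S x).re)
    (g : ℝ × ℝ → ℂ) (hg : SP g) : ∃ C : ℝ, 0 ≤ C ∧ ∀ (τ c u : ℝ) (m : ℤ), 0 ≤ τ →
      (1 + (m : ℝ) ^ 2) * ‖J S 0 g τ (c + u) m + J S 0 g τ (c - u) m - 2 * J S 0 g τ c m‖
        ≤ C * u ^ 2 * Real.exp (-(σ * τ)) := by
  have g1 := hg.dV (1, 0)
  have g2 := (hg.mul (hS.dV (1, 0))).neg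
  obtain ⟨C1, hC1, h1⟩ := J_bound2 hS hσ hσS 0 _ (g1.dV (1, 0))
  obtain ⟨C2, hC2, h2⟩ := J_bound2 hS hσ hσS 1 _ (g1.mul (hS.dV (1, 0))).neg
  obtain ⟨C3, hC3, h3⟩ := J_bound2 hS hσ hσS 1 _ (g2.dV (1, 0))
  obtain ⟨C4, hC4, h4⟩ := J_bound2 hS hσ hσS 2 _ (g2.mul (hS.dV (1, 0))).neg
  refine ⟨2 * (C1 + C2 + C3 + C4), by positivity, fun τ c u m hτ => ?_⟩
  have hm : 0 < 1 + (m : ℝ) ^ 2 := by positivity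
  have key := second_diff (fun q => J S 0 g τ q m) _ _ (fun q => J_deriv_q hS hg 0 m τ q)
    (fun q => (J_deriv_q hS g1 0 m τ q).add (J_deriv_q hS g2 1 m τ q))
    ((C1 + C2 + C3 + C4) * Real.exp (-(σ * τ)) / (1 + (m : ℝ) ^ 2)) (fun q => by
      rw [le_div_iff₀ hm, mul_comm]
      have a1 := h1 τ q m hτ
      have a2 := h2 τ q m hτ
      have a3 := h3 τ q m hτ
      have a4 := h4 τ q m hτ
      refine (mul_le_mul_of_nonneg_left ((norm_add_le _ _).trans
        (add_le_add (norm_add_le _ _) (norm_add_le _ _))) hm.le).trans ?_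
      simp only [zero_add] 
      norm_num at *
      linarith) c u
  rw [mul_comm]
  calc _ ≤ (2 * ((C1 + C2 + C3 + C4) * Real.exp (-(σ * τ)) / (1 + (m : ℝ) ^ 2)) * u ^ 2) *
        (1 + (m : ℝ) ^ 2) := by gcongr
    _ = _ := by field_simp

lemma J_zero {S : ℝ × ℝ → ℂ} (hS : SP S) {σ : ℝ} (hσ : 0 < σ) (hσS : ∀ x, 2 * σ ≤ (S x).re)
    (g : ℝ × ℝ → ℂ) (hg : SP g) : ∃ C : ℝ, 0 ≤ C ∧ ∀ (c : ℝ) (m : ℤ) (N : ℝ), 0 < N →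
      (1 + (m : ℝ) ^ 2) * ‖J S 0 g (Real.pi * m ^ 2 / (2 * N)) c m - J S 0 g 0 c m‖ ≤ C / N := by
  obtain ⟨C, hC0, hC⟩ := J_bound4 hS hσ hσS 0 _ (hg.mul hS).neg
  refine ⟨C * (Real.pi / 2), by positivity, fun c m N hN => ?_⟩
  rcases eq_or_ne m 0 with rfl | hm
  · simp; positivity
  have hm2 : 0 < (m : ℝ) ^ 2 := by positivity
  have hp : 0 < (m : ℝ) ^ 2 * (1 + (m : ℝ) ^ 2) := by positivity
  have ht : 0 ≤ Real.pi * m ^ 2 / (2 * N) := by positivity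
  have key := (convex_Ici (0 : ℝ)).norm_image_sub_le_of_norm_hasDerivWithin_le
    (f := fun τ => J S 0 g τ c m) (C := C / ((m : ℝ) ^ 2 * (1 + (m : ℝ) ^ 2)))
    (fun τ _ => (J_deriv_τ hS hg m τ c).hasDerivWithinAt) (fun τ hτ => by
      rw [le_div_iff₀ hp, mul_comm]; exact hC τ c m hτ) (Set.mem_Ici.2 le_rfl) (Set.mem_Ici.2 ht)
  rw [sub_zero, Real.norm_of_nonneg ht] at key
  calc _ ≤ (1 + (m : ℝ) ^ 2) * (C / ((m : ℝ) ^ 2 * (1 + (m : ℝ) ^ 2)) *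
        (Real.pi * m ^ 2 / (2 * N))) := by gcongr
    _ = _ := by field_simp


noncomputable def tf (N : ℝ) (m : ℤ) (u : ℝ) : ℝ :=
  2 * Real.pi * N * u ^ 2 + Real.pi * m ^ 2 / (2 * N)

lemma tf_nonneg {N : ℝ} (hN : 0 < N) (m : ℤ) (u : ℝ) : 0 ≤ tf N m u := by
  have := Real.pi_pos
  unfold tf; positivity

lemma tf_ge {N : ℝ} (hN : 0 < N) (m : ℤ) (u : ℝ) : 2 * Real.pi * N * u ^ 2 ≤ tf N m u := by
  have := Real.pi_pos
  have h : 0 ≤ Real.pi * m ^ 2 / (2 * N) := by positivity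
  unfold tf; linarith

lemma tf_cont (N : ℝ) (m : ℤ) : Continuous (tf N m) := by
  unfold tf; fun_prop

noncomputable def K (S g : ℝ × ℝ → ℂ) (N c : ℝ) (m : ℤ) : ℂ :=
  ∫ u : ℝ, (Real.sqrt (2 * N) : ℂ) * J S 0 g (tf N m u) (c + u) m

lemma gauss_swap {s : ℝ × ℝ → ℝ} {f : ℝ × ℝ → ℂ} (hspos : ∀ x, 0 < s x)
    (hS : SP (fun x => (s x : ℂ))) (hR : SP (fun x => (Real.sqrt (s x) : ℂ))) (hf : SP f)
    {σ : ℝ} (hσ : 0 < σ) (hσS : ∀ x, 2 * σ ≤ s x) {N : ℝ} (hN : 0 < N) (c : ℝ) (m : ℤ) :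
    ∫ u : ℝ, (Real.sqrt (2 * N) : ℂ) *
      J (fun x => (s x : ℂ)) 0 (fun x => f x * (Real.sqrt (s x) : ℂ)) (tf N m u) c m =
    J (fun x => (s x : ℂ)) 0 f (Real.pi * m ^ 2 / (2 * N)) c m := by
  have hpi := Real.pi_pos
  have hg := hf.mul hR
  obtain ⟨C, hC0, hC⟩ := hg.bdd
  unfold J
  simp only [intervalIntegral.integral_of_le (zero_le_one' ℝ)]
  simp_rw [← integral_const_mul]
  rw [integral_integral_swap]
  · refine integral_congr_ae (Filter.Eventually.of_forall fun p => ?_)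
    simp only
    have hs := hspos (c, p)
    set b := 2 * Real.pi * N * s (c, p) with hb
    have hbpos : 0 < b := by positivity
    have e : ∀ u : ℝ, (Real.sqrt (2 * N) : ℂ) * j (fun x => (s x : ℂ)) 0
        (fun x => f x * (Real.sqrt (s x) : ℂ)) (tf N m u) c p m =
        ((Real.sqrt (2 * N) : ℂ) * (Real.sqrt (s (c, p)) : ℂ) *
          j (fun x => (s x : ℂ)) 0 f (Real.pi * m ^ 2 / (2 * N)) c p m) *
          ((Real.exp (-b * u ^ 2) : ℝ) : ℂ) := by
      intro u
      unfold j
      have : Complex.exp (-((tf N m u : ℝ) * (s (c, p) : ℂ))) =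
          Complex.exp (-(((Real.pi * m ^ 2 / (2 * N) : ℝ) : ℂ) * (s (c, p) : ℂ))) *
          ((Real.exp (-b * u ^ 2) : ℝ) : ℂ) := by
        rw [Complex.ofReal_exp, ← Complex.exp_add]
        congr 1
        rw [hb, tf]; push_cast; ring
      simp only [this, pow_zero]; ring
    simp_rw [e]
    rw [integral_const_mul, integral_complex_ofReal, integral_gaussian]
    have h2 : Real.sqrt (2 * N) * Real.sqrt (s (c, p)) * Real.sqrt (Real.pi / b) = 1 := by
      rw [← Real.sqrt_mul (by positivity), ← Real.sqrt_mul (by positivity), Real.sqrt_eq_one, hb]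
      field_simp
    have h3 : (Real.sqrt (2 * N) : ℂ) * (Real.sqrt (s (c, p)) : ℂ) * (Real.sqrt (Real.pi / b) : ℂ) = 1 := by
      exact_mod_cast h2
    calc _ = ((Real.sqrt (2 * N) : ℂ) * (Real.sqrt (s (c, p)) : ℂ) * (Real.sqrt (Real.pi / b) : ℂ)) *
        j (fun x => (s x : ℂ)) 0 f (Real.pi * m ^ 2 / (2 * N)) c p m := by
          ring
      _ = _ := by rw [h3, one_mul]
  · have i1 : Integrable (fun u : ℝ => Real.sqrt (2 * N) * C * Real.exp (-(4 * Real.pi * N * σ) * u ^ 2)) :=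
      (integrable_exp_neg_mul_sq (by positivity)).const_mul _
    have i2 : Integrable (fun _ : ℝ => (1 : ℝ)) (volume.restrict (Set.Ioc (0 : ℝ) 1)) := by
      simp
    refine (i1.mul_prod i2).mono' ?_ (Filter.Eventually.of_forall fun z => ?_)
    · refine Continuous.aestronglyMeasurable ?_
      exact continuous_const.mul (cont_jc hS hg 0 m ((tf_cont N m).comp continuous_fst)
        continuous_const continuous_snd)
    · simp only [Function.uncurry, norm_mul, Complex.norm_real, mul_one]
      rw [norm_j _ _ _ (tf_nonneg hN m _), Real.norm_of_nonneg (Real.sqrt_nonneg _), mul_assoc (Real.sqrt _)]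
      simp only [pow_zero, one_mul, Complex.ofReal_re]
      gcongr
      · exact hC _
      · have h1 := tf_ge hN m z.1
        have h2 := hσS (c, z.2)
        have : 2 * Real.pi * N * z.1 ^ 2 * (2 * σ) ≤ tf N m z.1 * s (c, z.2) := by
          gcongr
          exact tf_nonneg hN m _
        linarith

lemma J_int {S g : ℝ × ℝ → ℂ} (hS : SP S) (hg : SP g) {σ : ℝ} (hσ : 0 < σ)
    (hσS : ∀ x, 2 * σ ≤ (S x).re) {N : ℝ} (hN : 0 < N) (m : ℤ) {a : ℝ → ℝ} (ha : Continuous a)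
    {d : ℝ} :
    Integrable (fun u => J S 0 g (tf N m (u - d)) (a u) m) := by
  have hpi := Real.pi_pos
  obtain ⟨C, hC0, hC⟩ := J_bound hS hσ hσS 0 0 g hg
  have i1 : Integrable (fun u : ℝ => C * Real.exp (-(2 * Real.pi * N * σ) * (u - d) ^ 2)) :=
    ((integrable_exp_neg_mul_sq (by positivity)).const_mul C).comp_sub_right d
  refine i1.mono' ?_ (Filter.Eventually.of_forall fun u => ?_)
  · exact ((cont_J hS hg 0 m).comp
      (((tf_cont N m).comp (continuous_id.sub continuous_const)).prodMk ha)).aestronglyMeasurable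
  · have := hC (tf N m (u - d)) (a u) m (tf_nonneg hN m _)
    rw [pow_zero, one_mul] at this
    refine this.trans ?_
    gcongr
    have h1 := tf_ge hN m (u - d)
    nlinarith

lemma J_int0 {S g : ℝ × ℝ → ℂ} (hS : SP S) (hg : SP g) {σ : ℝ} (hσ : 0 < σ)
    (hσS : ∀ x, 2 * σ ≤ (S x).re) {N : ℝ} (hN : 0 < N) (m : ℤ) {a : ℝ → ℝ} (ha : Continuous a) :
    Integrable (fun u => J S 0 g (tf N m u) (a u) m) := by
  simpa using J_int hS hg hσ hσS hN m ha (d := 0)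

lemma tf_neg (N : ℝ) (m : ℤ) (u : ℝ) : tf N m (-u) = tf N m u := by simp [tf]

lemma K_main {s : ℝ × ℝ → ℝ} {f : ℝ × ℝ → ℂ} (hspos : ∀ x, 0 < s x)
    (hS : SP (fun x => (s x : ℂ))) (hR : SP (fun x => (Real.sqrt (s x) : ℂ))) (hf : SP f)
    {σ : ℝ} (hσ : 0 < σ) (hσS : ∀ x, 2 * σ ≤ s x) :
    ∃ C : ℝ, 0 ≤ C ∧ ∀ (c : ℝ) (m : ℤ) (N : ℝ), 0 < N → (1 + (m : ℝ) ^ 2) *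
      ‖K (fun x => (s x : ℂ)) (fun x => f x * (Real.sqrt (s x) : ℂ)) N c m -
       J (fun x => (s x : ℂ)) 0 f (Real.pi * m ^ 2 / (2 * N)) c m‖ ≤ C / N := by
  have hpi := Real.pi_pos
  have hg := hf.mul hR
  set S : ℝ × ℝ → ℂ := fun x => (s x : ℂ) with hSdef
  set g : ℝ × ℝ → ℂ := fun x => f x * (Real.sqrt (s x) : ℂ) with hgdef
  have hσS' : ∀ x, 2 * σ ≤ (S x).re := fun x => by simpa [hSdef] using hσS x
  obtain ⟨C, hC0, hC⟩ := J_second hS hσ hσS' g hg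
  refine ⟨C * (1 / (Real.pi * σ)) * Real.sqrt (2 / σ), by positivity, fun c m N hN => ?_⟩
  rw [← gauss_swap hspos hS hR hf hσ hσS hN c m]
  have hm : 0 < 1 + (m : ℝ) ^ 2 := by positivity
  have I1 := J_int0 hS hg hσ hσS' hN m (a := fun u => c + u) (by fun_prop)
  have I2 := J_int0 hS hg hσ hσS' hN m (a := fun u => c - u) (by fun_prop)
  have I3 := J_int0 hS hg hσ hσS' hN m (a := fun u => c) (by fun_prop)
  have e1 : ∫ u : ℝ, J S 0 g (tf N m u) (c - u) m = ∫ u : ℝ, J S 0 g (tf N m u) (c + u) m := by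
    rw [← integral_neg_eq_self]
    refine integral_congr_ae (Filter.Eventually.of_forall fun u => ?_)
    simp [tf_neg]
  have e2 : K S g N c m - ∫ u : ℝ, (Real.sqrt (2 * N) : ℂ) * J S 0 g (tf N m u) c m =
      (Real.sqrt (2 * N) : ℂ) / 2 * ∫ u : ℝ, (J S 0 g (tf N m u) (c + u) m +
        J S 0 g (tf N m u) (c - u) m - 2 * J S 0 g (tf N m u) c m) := by
    rw [integral_sub (by exact I1.add I2) (I3.const_mul 2), integral_add I1 I2, e1, integral_const_mul]
    unfold K
    rw [integral_const_mul, integral_const_mul]; ring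
  rw [e2, norm_mul]
  have hb : ∀ u : ℝ, ‖J S 0 g (tf N m u) (c + u) m +
        J S 0 g (tf N m u) (c - u) m - 2 * J S 0 g (tf N m u) c m‖ ≤
        C / (1 + (m : ℝ) ^ 2) * (1 / (Real.pi * N * σ)) * Real.exp (-(Real.pi * N * σ) * u ^ 2) := by
    intro u
    have h := hC (tf N m u) c u m (tf_nonneg hN m u)
    rw [mul_comm, ← le_div_iff₀ hm] at h
    refine h.trans ?_
    have h2 : Real.exp (-(σ * tf N m u)) ≤
        Real.exp (-(Real.pi * N * σ) * u ^ 2) * Real.exp (-(Real.pi * N * σ * u ^ 2)) := by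
      rw [← Real.exp_add, Real.exp_le_exp]
      nlinarith [tf_ge hN m u]
    have h3 : u ^ 2 * Real.exp (-(Real.pi * N * σ * u ^ 2)) ≤ 1 / (Real.pi * N * σ) := by
      have := Real.add_one_le_exp (Real.pi * N * σ * u ^ 2)
      rw [Real.exp_neg, ← div_eq_mul_inv, div_le_div_iff₀ (Real.exp_pos _) (by positivity)]
      linarith
    calc C * u ^ 2 * Real.exp (-(σ * tf N m u)) / (1 + (m : ℝ) ^ 2)
        ≤ C * u ^ 2 * (Real.exp (-(Real.pi * N * σ) * u ^ 2) * Real.exp (-(Real.pi * N * σ * u ^ 2)))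
          / (1 + (m : ℝ) ^ 2) := by gcongr
      _ = C / (1 + (m : ℝ) ^ 2) * (u ^ 2 * Real.exp (-(Real.pi * N * σ * u ^ 2))) *
          Real.exp (-(Real.pi * N * σ) * u ^ 2) := by ring
      _ ≤ _ := by gcongr
  have hi : Integrable (fun u : ℝ => C / (1 + (m : ℝ) ^ 2) * (1 / (Real.pi * N * σ)) *
      Real.exp (-(Real.pi * N * σ) * u ^ 2)) :=
    (integrable_exp_neg_mul_sq (by positivity)).const_mul _
  have hn := norm_integral_le_of_norm_le hi (Filter.Eventually.of_forall hb)
  rw [integral_const_mul, integral_gaussian] at hn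
  have hn2 : ‖(Real.sqrt (2 * N) : ℂ) / 2‖ ≤ Real.sqrt (2 * N) := by
    rw [norm_div, Complex.norm_real, Real.norm_of_nonneg (Real.sqrt_nonneg _)]
    have := Real.sqrt_nonneg (2 * N)
    simp
  have e3 : Real.sqrt (2 * N) * Real.sqrt (Real.pi / (Real.pi * N * σ)) = Real.sqrt (2 / σ) := by
    rw [← Real.sqrt_mul (by positivity)]; congr 1; field_simp
  calc _ ≤ (1 + (m : ℝ) ^ 2) * (Real.sqrt (2 * N) * (C / (1 + (m : ℝ) ^ 2) * (1 / (Real.pi * N * σ)) *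
        Real.sqrt (Real.pi / (Real.pi * N * σ)))) := by gcongr
    _ = C * (1 / (Real.pi * N * σ)) *
        (Real.sqrt (2 * N) * Real.sqrt (Real.pi / (Real.pi * N * σ))) := by field_simp
    _ = _ := by rw [e3]; field_simp

lemma SP_s {s : ℝ × ℝ → ℝ} (hs : ContDiff ℝ (⊤ : ℕ∞) s)
    (hper : ∀ x : ℝ × ℝ, s (x.1 + 1, x.2) = s x ∧ s (x.1, x.2 + 1) = s x) :
    SP (fun x => (s x : ℂ)) :=
  ⟨Complex.ofRealCLM.contDiff.comp hs, fun q p => by rw [(hper (q, p)).1],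
    fun q p => by rw [(hper (q, p)).2]⟩

lemma SP_sqrt {s : ℝ × ℝ → ℝ} (hs : ContDiff ℝ (⊤ : ℕ∞) s) (hpos : ∀ x, 0 < s x)
    (hper : ∀ x : ℝ × ℝ, s (x.1 + 1, x.2) = s x ∧ s (x.1, x.2 + 1) = s x) :
    SP (fun x => (Real.sqrt (s x) : ℂ)) :=
  SP_s (s := fun x => Real.sqrt (s x)) (hs.sqrt fun x => (hpos x).ne')
    fun x => by rw [(hper x).1, (hper x).2]; exact ⟨rfl, rfl⟩

lemma s_lower {s : ℝ × ℝ → ℝ} (hs : ContDiff ℝ (⊤ : ℕ∞) s) (hpos : ∀ x, 0 < s x)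
    (hper : ∀ x : ℝ × ℝ, s (x.1 + 1, x.2) = s x ∧ s (x.1, x.2 + 1) = s x) :
    ∃ σ : ℝ, 0 < σ ∧ ∀ x, 2 * σ ≤ s x := by
  obtain ⟨C, hC0, hC⟩ := (SP_s (s := fun x => (s x)⁻¹) (hs.inv fun x => (hpos x).ne')
    fun x => by rw [(hper x).1, (hper x).2]; exact ⟨rfl, rfl⟩).bdd
  have hCpos : 0 < C := by
    refine lt_of_lt_of_le ?_ (hC (0, 0))
    rw [norm_pos_iff]; exact_mod_cast (inv_pos.2 (hpos (0, 0))).ne'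
  refine ⟨1 / (2 * C), by positivity, fun x => ?_⟩
  have := hC x
  rw [Complex.norm_real, Real.norm_of_nonneg (inv_pos.2 (hpos x)).le] at this
  have h2 := inv_le_of_inv_le₀ (hpos x) this
  calc 2 * (1 / (2 * C)) = C⁻¹ := by field_simp
    _ ≤ _ := h2

lemma K_diff {s : ℝ × ℝ → ℝ} {f : ℝ × ℝ → ℂ} (hs : ContDiff ℝ (⊤ : ℕ∞) s) (hpos : ∀ x, 0 < s x)
    (hper : ∀ x : ℝ × ℝ, s (x.1 + 1, x.2) = s x ∧ s (x.1, x.2 + 1) = s x) (hf : SP f) :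
    ∃ C : ℝ, 0 ≤ C ∧ ∀ (c : ℝ) (m : ℤ) (N : ℝ), 0 < N → (1 + (m : ℝ) ^ 2) *
      ‖K (fun x => (s x : ℂ)) (fun x => f x * (Real.sqrt (s x) : ℂ)) N c m -
       J (fun _ => 0) 0 f 0 c m‖ ≤ C / N := by
  obtain ⟨σ, hσ, hσs⟩ := s_lower hs hpos hper
  have hS := SP_s hs hper
  obtain ⟨C1, hC1, h1⟩ := K_main hpos hS (SP_sqrt hs hpos hper) hf hσ hσs
  obtain ⟨C2, hC2, h2⟩ := J_zero hS hσ (fun x => by simpa using hσs x) f hf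
  refine ⟨C1 + C2, by positivity, fun c m N hN => ?_⟩
  have e : J (fun _ => 0) 0 f 0 c m = J (fun x => (s x : ℂ)) 0 f 0 c m := by simp [J, j]
  rw [e, add_div]
  refine le_trans ?_ (add_le_add (h1 c m N hN) (h2 c m N hN))
  rw [← mul_add]
  gcongr
  exact norm_sub_le_norm_sub_add_norm_sub _ _ _


lemma schur {n : ℕ} (A : EuclideanSpace ℂ (Fin n) →L[ℂ] EuclideanSpace ℂ (Fin n))
    (b : Fin n → Fin n → ℝ) (B : ℝ) (hB : 0 ≤ B)
    (hb : ∀ i k, ‖(A (EuclideanSpace.single k 1)) i‖ ≤ b i k)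
    (hr : ∀ i, ∑ k, b i k ≤ B) (hc : ∀ k, ∑ i, b i k ≤ B) : ‖A‖ ≤ B := by
  refine A.opNorm_le_bound hB fun u => ?_
  have hb0 : ∀ i k, 0 ≤ b i k := fun i k => (norm_nonneg _).trans (hb i k)
  have hu : u = ∑ k, u k • EuclideanSpace.single k (1 : ℂ) := by
    ext i
    simp [Pi.single_apply]
  have hA : ∀ i, (A u) i = ∑ k, u k * (A (EuclideanSpace.single k 1)) i := by
    intro i
    conv_lhs => rw [hu]
    rw [map_sum]
    simp
  have h1 : ∀ i, ‖(A u) i‖ ^ 2 ≤ B * ∑ k, b i k * ‖u k‖ ^ 2 := by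
    intro i
    have l1 : ‖(A u) i‖ ≤ ∑ k, b i k * ‖u k‖ := by
      rw [hA]
      refine (norm_sum_le _ _).trans (Finset.sum_le_sum fun k _ => ?_)
      rw [norm_mul, mul_comm]
      exact mul_le_mul_of_nonneg_right (hb i k) (norm_nonneg _)
    calc ‖(A u) i‖ ^ 2 ≤ (∑ k, b i k * ‖u k‖) ^ 2 := by gcongr
      _ ≤ (∑ k, b i k) * ∑ k, b i k * ‖u k‖ ^ 2 :=
        Finset.sum_sq_le_sum_mul_sum_of_sq_le_mul _ (fun k _ => hb0 i k)
          (fun k _ => mul_nonneg (hb0 i k) (sq_nonneg _)) (fun k _ => le_of_eq (by ring))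
      _ ≤ _ := mul_le_mul_of_nonneg_right (hr i)
          (Finset.sum_nonneg fun k _ => mul_nonneg (hb0 i k) (sq_nonneg _))
  have h2 : ‖A u‖ ^ 2 ≤ (B * ‖u‖) ^ 2 := by
    rw [EuclideanSpace.norm_sq_eq, mul_pow, EuclideanSpace.norm_sq_eq]
    calc ∑ i, ‖(A u) i‖ ^ 2 ≤ ∑ i, B * ∑ k, b i k * ‖u k‖ ^ 2 := Finset.sum_le_sum fun i _ => h1 i
      _ = B * ∑ k, (∑ i, b i k) * ‖u k‖ ^ 2 := by
        rw [← Finset.mul_sum, Finset.sum_comm]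
        simp_rw [Finset.sum_mul]
      _ ≤ B * ∑ k, B * ‖u k‖ ^ 2 := by
        gcongr with k
        exact hc k
      _ = _ := by rw [← Finset.mul_sum]; ring
  exact le_of_sq_le_sq h2 (by positivity)

noncomputable def w (m : ℤ) : ℝ := 1 / (1 + (m : ℝ) ^ 2)

lemma w_nonneg (m : ℤ) : 0 ≤ w m := by unfold w; positivity

lemma w_summable : Summable w := by
  have h1 : Summable (fun n : ℤ => 1 / (n : ℝ) ^ 2) := Real.summable_one_div_int_pow.2 (by norm_num)
  have h2 : Summable (fun n : ℤ => if n = 0 then (1 : ℝ) else 0) := (hasSum_ite_eq 0 1).summable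
  refine Summable.of_nonneg_of_le w_nonneg (fun n => ?_) (h1.add h2)
  unfold w
  by_cases h : n = 0
  · simp [h]
  · simp only [h, if_false, add_zero]
    have : 0 < (n : ℝ) ^ 2 := by positivity
    gcongr
    linarith

lemma exp_summable {κ : ℝ} (hκ : 0 < κ) : Summable (fun n : ℤ => Real.exp (-(κ * (n : ℝ) ^ 2))) := by
  refine Summable.of_nonneg_of_le (fun n => (Real.exp_pos _).le) (fun n => ?_)
    (w_summable.mul_left (1 + 1 / κ))
  have h1 := Real.add_one_le_exp (κ * (n : ℝ) ^ 2)
  have hn : 0 ≤ (n : ℝ) ^ 2 := sq_nonneg _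
  rw [Real.exp_neg, w, mul_one_div, ← one_div, div_le_div_iff₀ (Real.exp_pos _) (by positivity)]
  have h2 : (1 + 1 / κ) * (κ * (n : ℝ) ^ 2 + 1) ≤ (1 + 1 / κ) * Real.exp (κ * (n : ℝ) ^ 2) := by
    gcongr
  have h3 : (1 + 1 / κ) * (κ * (n : ℝ) ^ 2 + 1) = κ * (n : ℝ) ^ 2 + 1 + (n : ℝ) ^ 2 + 1 / κ := by
    field_simp; ring
  have h4 : 0 < 1 / κ := by positivity
  have h5 : 0 ≤ κ * (n : ℝ) ^ 2 := by positivity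
  linarith

lemma w_row_summable (N : ℕ) [NeZero N] (a : ℤ) : Summable (fun μ : ℤ => w (a - N * μ)) := by
  have hinj : Function.Injective (fun μ : ℤ => a - N * μ) := by
    intro x y h
    have h' : (N : ℤ) * x = N * y := by simp only at h; linarith
    exact mul_left_cancel₀ (by exact_mod_cast NeZero.ne N) h'
  exact w_summable.comp_injective hinj

lemma w_row (N : ℕ) [NeZero N] (i : ℤ) :
    ∑ k : Fin N, ∑' μ : ℤ, w (i - (k : ℕ) - N * μ) = ∑' m, w m := by
  have h := w_summable.hasSum
  rw [← (Equiv.subLeft i).hasSum_iff, ← (Int.divModEquiv N).symm.hasSum_iff,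
    ← (Equiv.prodComm (Fin N) ℤ).hasSum_iff] at h
  have h2 := h.prod_fiberwise (g := fun k : Fin N => ∑' μ : ℤ, w (i - (k : ℕ) - N * μ)) (fun k => by
    have := (w_row_summable N (i - (k : ℕ))).hasSum
    convert this using 2 with μ
    simp only [Function.comp, Equiv.prodComm_apply, Prod.swap_prod_mk, Int.divModEquiv_symm_apply,
      Equiv.subLeft_apply]
    congr 1; ring)
  exact (hasSum_fintype _).unique h2

lemma w_symm (N : ℕ) (a : ℤ) : ∑' μ : ℤ, w (a - N * μ) = ∑' μ : ℤ, w (-a - N * μ) := by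
  rw [← (Equiv.neg ℤ).tsum_eq]
  congr 1; funext μ
  unfold w; simp only [Equiv.neg_apply]; push_cast; ring_nf

lemma w_col (N : ℕ) [NeZero N] (k : ℤ) :
    ∑ i : Fin N, ∑' μ : ℤ, w ((i : ℕ) - k - N * μ) = ∑' m, w m := by
  rw [← w_row N k]
  refine Finset.sum_congr rfl fun i _ => ?_
  rw [w_symm]; simp

lemma schur_final {N : ℕ} [NeZero N] (A : EuclideanSpace ℂ (Fin N) →L[ℂ] EuclideanSpace ℂ (Fin N))
    (D : ℝ) (hD : 0 ≤ D) (hA : ∀ i k : Fin N, ‖(A (EuclideanSpace.single k 1)) i‖ ≤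
      D * ∑' μ : ℤ, w ((i : ℕ) - (k : ℕ) - N * μ)) : ‖A‖ ≤ D * ∑' m, w m := by
  refine schur A _ _ (mul_nonneg hD (tsum_nonneg w_nonneg)) hA (fun i => ?_) (fun k => ?_)
  · rw [← Finset.mul_sum, w_row N ((i : ℕ) : ℤ)]
  · rw [← Finset.mul_sum, w_col N ((k : ℕ) : ℤ)]


noncomputable def rr (N : ℕ) (q s a : ℝ) : ℝ :=
  (2 * N * s) ^ ((1 : ℝ) / 4) * Real.exp (-(Real.pi * N * s * (a - q) ^ 2))

noncomputable def th (N : ℕ) (q p a : ℝ) : ℝ := 2 * Real.pi * N * p * a - Real.pi * N * p * q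

lemma planeCS_eq {N : ℕ} (hN : 0 < N) (x : ℝ × ℝ) (s a : ℝ) :
    planeCS N x s a = (rr N x.1 s a : ℂ) * Complex.exp ((th N x.1 x.2 a : ℝ) * Complex.I) := by
  have hN' : (N : ℝ) ≠ 0 := by positivity
  have hNc : (N : ℂ) ≠ 0 := by exact_mod_cast hN.ne'
  have hpi := Real.pi_ne_zero
  have hpic : (Real.pi : ℂ) ≠ 0 := by exact_mod_cast hpi
  unfold planeCS rr
  have e1 : s / (Real.pi * hbar N) = 2 * N * s := by
    unfold hbar; field_simp
  rw [e1, Complex.ofReal_mul, Complex.ofReal_exp]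
  generalize (((2 * N * s) ^ ((1 : ℝ) / 4) : ℝ) : ℂ) = R
  rw [show ∀ A B C D E : ℂ, B * C * D = E * A → R * B * C * D = R * E * A from
    fun A B C D E h => by linear_combination R * h]
  rw [← Complex.exp_add, ← Complex.exp_add, ← Complex.exp_add]
  congr 1
  unfold hbar th
  push_cast
  field_simp
  ring

lemma rr_nonneg (N : ℕ) (q : ℝ) {s : ℝ} (hs : 0 ≤ s) (a : ℝ) : 0 ≤ rr N q s a := by
  unfold rr; positivity

lemma norm_planeCS {N : ℕ} (hN : 0 < N) (x : ℝ × ℝ) {s : ℝ} (hs : 0 ≤ s) (a : ℝ) :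
    ‖planeCS N x s a‖ = rr N x.1 s a := by
  rw [planeCS_eq hN, norm_mul, Complex.norm_exp_ofReal_mul_I, mul_one, Complex.norm_real,
    Real.norm_of_nonneg (rr_nonneg N _ hs a)]

lemma planeCS_cont {N : ℕ} (hN : 0 < N) {s : ℝ × ℝ → ℝ} (hs : Continuous s) (a : ℝ) :
    Continuous (fun x => planeCS N x (s x) a) := by
  have h0 : Continuous (fun x => (2 * N * s x) ^ ((1 : ℝ) / 4)) :=
    (continuous_const.mul hs).rpow_const fun x => Or.inr (by norm_num)
  simp_rw [planeCS_eq hN]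
  unfold rr th
  fun_prop

lemma planeCS_mul {N : ℕ} (hN : 0 < N) (q p : ℝ) {s : ℝ × ℝ → ℝ} (hs : ∀ x, 0 < s x)
    (f : ℝ × ℝ → ℂ) (i k : ℕ) (ν μ : ℤ) :
    f (q, p) * (planeCS N (q, p) (s (q, p)) ((i : ℝ) / N + (ν : ℤ)) *
      (starRingEnd ℂ) (planeCS N (q, p) (s (q, p)) ((k : ℝ) / N + ((ν + μ : ℤ) : ℝ)))) =
    (Real.sqrt (2 * N) : ℂ) * j (fun x => (s x : ℂ)) 0 (fun x => f x * (Real.sqrt (s x) : ℂ))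
      (tf N (i - k - N * μ) (q - ν - ((i : ℝ) + k + N * μ) / (2 * N))) q p (i - k - N * μ) := by
  have hN' : (N : ℝ) ≠ 0 := by positivity
  have hNc : (N : ℂ) ≠ 0 := by exact_mod_cast hN.ne'
  rw [planeCS_eq hN, planeCS_eq hN, map_mul, ← Complex.exp_conj, map_mul, Complex.conj_ofReal,
    Complex.conj_ofReal, Complex.conj_I]
  unfold j rr
  have hs0 := hs (q, p)
  set σ := s (q, p) with hσ
  have e1 : ((2 * N * σ) ^ ((1 : ℝ) / 4)) * ((2 * N * σ) ^ ((1 : ℝ) / 4)) =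
      Real.sqrt (2 * N) * Real.sqrt σ := by
    rw [← Real.sqrt_mul (by positivity), Real.sqrt_eq_rpow, ← Real.rpow_add (by positivity)]
    norm_num
  have e1' : (((2 * N * σ) ^ ((1 : ℝ) / 4) : ℝ) : ℂ) * (((2 * N * σ) ^ ((1 : ℝ) / 4) : ℝ) : ℂ) =
      (Real.sqrt (2 * N) : ℂ) * (Real.sqrt σ : ℂ) := by
    exact_mod_cast e1
  simp only [Complex.ofReal_mul, Complex.ofReal_exp]
  rw [show ∀ F R E1 T1 E2 T2 : ℂ, F * (R * E1 * T1 * (R * E2 * T2)) =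
    F * (R * R) * ((E1 * T1) * (E2 * T2)) from fun _ _ _ _ _ _ => by ring, e1']
  rw [← Complex.exp_add, ← Complex.exp_add, ← Complex.exp_add]
  simp only [pow_zero, ← hσ]
  rw [show ∀ F A B E T : ℂ, A * (1 * (F * B) * E * T) = F * (A * B) * (E * T) from
    fun _ _ _ _ _ => by ring, ← Complex.exp_add]
  congr 2
  unfold th tf
  push_cast
  field_simp
  ring

/-- the closed unit square -/
def QQ : Set (ℝ × ℝ) := Set.Icc (0 : ℝ) 1 ×ˢ Set.Icc (0 : ℝ) 1
def Q : Set (ℝ × ℝ) := Set.Ico (0 : ℝ) 1 ×ˢ Set.Ico (0 : ℝ) 1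

lemma Q_sub : Q ⊆ QQ := Set.prod_mono Set.Ico_subset_Icc_self Set.Ico_subset_Icc_self

lemma QQ_compact : IsCompact QQ := isCompact_Icc.prod isCompact_Icc

lemma planeCS_bound {N : ℕ} (hN : 0 < N) {s : ℝ × ℝ → ℝ} (hpos : ∀ x, 0 < s x) {σ M : ℝ}
    (hσ : 0 < σ) (hσs : ∀ x, 2 * σ ≤ s x) (hM : ∀ x, s x ≤ M) :
    ∃ D κ : ℝ, 0 ≤ D ∧ 0 < κ ∧ ∀ (i : Fin N) (ν : ℤ) (x : ℝ × ℝ), x ∈ QQ →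
      ‖planeCS N x (s x) (((i : ℕ) : ℝ) / N + ν)‖ ≤ D * Real.exp (-(κ * (ν : ℝ) ^ 2)) := by
  have hpi := Real.pi_pos
  have hN' : (0 : ℝ) < N := by exact_mod_cast hN
  have hM0 : 0 < M := (hpos 0).trans_le (hM 0)
  refine ⟨(2 * N * M) ^ ((1 : ℝ) / 4) * Real.exp (2 * Real.pi * N * σ), Real.pi * N * σ,
    by positivity, by positivity, fun i ν x hx => ?_⟩
  rw [norm_planeCS hN x (hpos x).le, rr, mul_assoc ((2 * (N : ℝ) * M) ^ ((1 : ℝ) / 4)), ← Real.exp_add]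
  have hsx := hpos x
  gcongr
  · exact hM x
  · obtain ⟨⟨hx1, hx2⟩, _⟩ := hx
    have hi0 : 0 ≤ ((i : ℕ) : ℝ) / N := by positivity
    have hi1 : ((i : ℕ) : ℝ) / N ≤ 1 := by
      rw [div_le_one hN']; exact_mod_cast i.2.le
    set y := ((i : ℕ) : ℝ) / N - x.1 with hy
    have hy1 : y ^ 2 ≤ 1 := by
      have : |y| ≤ 1 := by rw [abs_le]; constructor <;> linarith
      exact (sq_le_one_iff_abs_le_one y).2 this
    have e : ((i : ℕ) : ℝ) / N + ν - x.1 = ν + y := by rw [hy]; ring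
    rw [e]
    have h1 : (ν : ℝ) ^ 2 / 2 - 1 ≤ (ν + y) ^ 2 := by nlinarith [sq_nonneg ((ν : ℝ) + 2 * y)]
    have h2 : Real.pi * N * (2 * σ) * (ν + y) ^ 2 ≤ Real.pi * N * s x * (ν + y) ^ 2 := by
      gcongr; exact hσs x
    have h3 : Real.pi * N * (2 * σ) * ((ν : ℝ) ^ 2 / 2 - 1) ≤ Real.pi * N * (2 * σ) * (ν + y) ^ 2 := by
      gcongr
    nlinarith

lemma torus_cont {N : ℕ} (hN : 0 < N) {s : ℝ × ℝ → ℝ} (hs : Continuous s) (hpos : ∀ x, 0 < s x)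
    {σ M : ℝ} (hσ : 0 < σ) (hσs : ∀ x, 2 * σ ≤ s x) (hM : ∀ x, s x ≤ M) :
    ContinuousOn (fun x => torusCS N x (s x)) QQ := by
  obtain ⟨D, κ, hD, hκ, hb⟩ := planeCS_bound hN hpos hσ hσs hM
  unfold torusCS
  refine (PiLp.continuous_toLp 2 (fun _ : Fin N => ℂ)).comp_continuousOn
    (continuousOn_pi.2 fun i => ?_)
  refine continuousOn_const.mul ?_
  exact continuousOn_tsum (fun ν => (planeCS_cont hN hs _).continuousOn)
    ((exp_summable hκ).mul_left D) (fun ν x hx => hb i ν x hx)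

lemma rankOne_cont {E : Type*} [NormedAddCommGroup E] [InnerProductSpace ℂ E] :
    Continuous (fun ψ : E => rankOne ψ) := by
  unfold rankOne
  have h1 : Continuous (fun ψ : E => innerSL ℂ ψ) := (innerSL ℂ).continuous
  exact ((ContinuousLinearMap.smulRightL ℂ E E).continuous.comp h1).clm_apply continuous_id

noncomputable def entry (N : ℕ) (i k : Fin N) :
    (EuclideanSpace ℂ (Fin N) →L[ℂ] EuclideanSpace ℂ (Fin N)) →L[ℂ] ℂ :=
  (EuclideanSpace.proj i : EuclideanSpace ℂ (Fin N) →L[ℂ] ℂ).comp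
    (ContinuousLinearMap.apply ℂ (EuclideanSpace ℂ (Fin N)) (EuclideanSpace.single k 1))

lemma entry_apply (N : ℕ) (i k : Fin N) (A) : entry N i k A = A (EuclideanSpace.single k 1) i := rfl

lemma op_entry {N : ℕ} (hN : 0 < N) {s : ℝ × ℝ → ℝ} {f : ℝ × ℝ → ℂ} (hs : Continuous s)
    (hpos : ∀ x, 0 < s x)
    {σ M : ℝ} (hσ : 0 < σ) (hσs : ∀ x, 2 * σ ≤ s x) (hM : ∀ x, s x ≤ M) (hf : Continuous f)
    (i k : Fin N) :
    (opAW N s f (EuclideanSpace.single k 1)) i = ∫ x in Q, f x *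
      ((∑' ν : ℤ, planeCS N x (s x) (((i : ℕ) : ℝ) / N + ν)) *
       (∑' ν : ℤ, (starRingEnd ℂ) (planeCS N x (s x) (((k : ℕ) : ℝ) / N + ν)))) := by
  have hN' : (0 : ℝ) < N := by exact_mod_cast hN
  have hint : IntegrableOn (fun x => f x • rankOne (torusCS N x (s x))) Q := by
    refine IntegrableOn.mono_set ?_ Q_sub
    refine ContinuousOn.integrableOn_compact QQ_compact ?_
    exact hf.continuousOn.smul (rankOne_cont.comp_continuousOn (torus_cont hN hs hpos hσ hσs hM))
  rw [← entry_apply]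
  unfold opAW
  rw [map_smul]
  change (N : ℂ) • entry N i k (∫ x in Q, _) = _
  rw [← ContinuousLinearMap.integral_comp_comm _ hint, smul_eq_mul, ← integral_const_mul]
  refine integral_congr_ae (Filter.Eventually.of_forall fun x => ?_)
  have e : (N : ℂ) * ((((N : ℝ) ^ (-(1 / 2) : ℝ) : ℝ) : ℂ) * (((N : ℝ) ^ (-(1 / 2) : ℝ) : ℝ) : ℂ)) = 1 := by
    have : (N : ℝ) * ((N : ℝ) ^ (-(1 / 2) : ℝ) * (N : ℝ) ^ (-(1 / 2) : ℝ)) = 1 := by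
      rw [← Real.rpow_add hN']; norm_num
      rw [Real.rpow_neg_one]; field_simp
    exact_mod_cast this
  simp only [map_smul, entry_apply, rankOne, ContinuousLinearMap.smulRight_apply, innerSL_apply_apply,
    EuclideanSpace.inner_single_right, PiLp.smul_apply, smul_eq_mul, torusCS,
    WithLp.equiv_symm_apply, map_mul, Complex.conj_ofReal, one_mul, Complex.conj_tsum]
  set a := ∑' ν : ℤ, planeCS N x (s x) (((i : ℕ) : ℝ) / N + ν)
  set b := ∑' ν : ℤ, (starRingEnd ℂ) (planeCS N x (s x) (((k : ℕ) : ℝ) / N + ν))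
  set r := (((N : ℝ) ^ (-(1 / 2) : ℝ) : ℝ) : ℂ)
  calc _ = ((N : ℂ) * (r * r)) * (f x * (a * b)) := by ring
    _ = _ := by rw [e, one_mul]

lemma J_per {S g : ℝ × ℝ → ℂ} (hS : SP S) (hg : SP g) (τ q : ℝ) (m n : ℤ) :
    J S 0 g τ (q + n) m = J S 0 g τ q m := by
  have : Function.Periodic (fun q => J S 0 g τ q m) 1 := by
    intro q
    simp only [J, j, hS.per1, hg.per1]
  simpa using this.int_mul n q

lemma op_hasSum {N : ℕ} (hN : 0 < N) {s : ℝ × ℝ → ℝ} {f : ℝ × ℝ → ℂ}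
    (hs : ContDiff ℝ (⊤ : ℕ∞) s) (hpos : ∀ x, 0 < s x)
    (hper : ∀ x : ℝ × ℝ, s (x.1 + 1, x.2) = s x ∧ s (x.1, x.2 + 1) = s x) (hf : SP f)
    (i k : Fin N) :
    HasSum (fun μ : ℤ => K (fun x => (s x : ℂ)) (fun x => f x * (Real.sqrt (s x) : ℂ)) N
      ((((i : ℕ) : ℝ) + ((k : ℕ) : ℝ) + N * μ) / (2 * N)) ((i : ℕ) - (k : ℕ) - N * μ))
      ((opAW N s f (EuclideanSpace.single k 1)) i) := by
  have hN' : (0 : ℝ) < N := by exact_mod_cast hN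
  obtain ⟨σ, hσ, hσs⟩ := s_lower hs hpos hper
  have hS := SP_s hs hper
  have hR := SP_sqrt hs hpos hper
  have hg := hf.mul hR
  obtain ⟨M, hM0, hM'⟩ := hS.bdd
  have hM : ∀ x, s x ≤ M := fun x => (le_abs_self _).trans (by simpa using hM' x)
  obtain ⟨Cf, hCf0, hCf⟩ := hf.bdd
  obtain ⟨D, κ, hD, hκ, hb⟩ := planeCS_bound hN hpos hσ hσs hM
  have hsum := (exp_summable hκ).mul_left D
  have hnn : ∀ ν : ℤ, 0 ≤ D * Real.exp (-(κ * (ν : ℝ) ^ 2)) := fun ν => by positivity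
  rw [op_entry hN hs.continuous hpos hσ hσs hM hf.cont]
  -- the doubly indexed family
  set F : ℤ × ℤ → ℝ × ℝ → ℂ := fun z x => f x *
    (planeCS N x (s x) (((i : ℕ) : ℝ) / N + (z.1 : ℝ)) *
      (starRingEnd ℂ) (planeCS N x (s x) (((k : ℕ) : ℝ) / N + (z.2 : ℝ)))) with hF
  have hFc : ∀ z, Continuous (F z) := fun z =>
    hf.cont.mul ((planeCS_cont hN hs.continuous _).mul
      (Complex.continuous_conj.comp (planeCS_cont hN hs.continuous _)))
  have hFb : ∀ z, ∀ x ∈ QQ, ‖F z x‖ ≤ Cf * ((D * Real.exp (-(κ * (z.1 : ℝ) ^ 2))) *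
      (D * Real.exp (-(κ * (z.2 : ℝ) ^ 2)))) := by
    intro z x hx
    simp only [hF, norm_mul, RCLike.norm_conj]
    gcongr
    · exact hCf x
    · exact hb i z.1 x hx
    · exact hb k z.2 x hx
  have hFi : ∀ z, IntegrableOn (F z) Q := fun z =>
    ((hFc z).continuousOn.integrableOn_compact QQ_compact).mono_set Q_sub
  have hFs : Summable (fun z : ℤ × ℤ => Cf * ((D * Real.exp (-(κ * (z.1 : ℝ) ^ 2))) *
      (D * Real.exp (-(κ * (z.2 : ℝ) ^ 2))))) :=
    (hsum.mul_of_nonneg hsum hnn hnn).mul_left Cf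
  have hQm : MeasurableSet Q := measurableSet_Ico.prod measurableSet_Ico
  have hQv : volume Q = 1 := by
    unfold Q; rw [Measure.volume_eq_prod, Measure.prod_prod]; simp
  have hFsum : Summable (fun z => ∫ x in Q, ‖F z x‖) := by
    refine Summable.of_nonneg_of_le (fun z => integral_nonneg fun x => norm_nonneg _) (fun z => ?_) hFs
    refine (setIntegral_mono_on (hFi z).norm (integrableOn_const (by simp [hQv]))
      hQm (fun x hx => hFb z x (Q_sub hx))).trans ?_
    simp [Measure.real, hQv]
  have key := hasSum_integral_of_summable_integral_norm hFi hFsum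
  have e0 : ∫ x in Q, ∑' z, F z x = ∫ x in Q, f x *
      ((∑' ν : ℤ, planeCS N x (s x) (((i : ℕ) : ℝ) / N + ν)) *
       (∑' ν : ℤ, (starRingEnd ℂ) (planeCS N x (s x) (((k : ℕ) : ℝ) / N + ν)))) := by
    refine setIntegral_congr_fun hQm fun x hx => ?_
    simp only [hF]
    rw [tsum_mul_left, tsum_mul_tsum_of_summable_norm]
    · exact Summable.of_nonneg_of_le (fun _ => norm_nonneg _) (fun ν => hb i ν x (Q_sub hx)) hsum
    · exact Summable.of_nonneg_of_le (fun _ => norm_nonneg _) (fun ν => by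
        rw [RCLike.norm_conj]; exact hb k ν x (Q_sub hx)) hsum
  rw [e0] at key
  let e : ℤ × ℤ ≃ ℤ × ℤ :=
    { toFun := fun z => (z.2, z.2 + z.1)
      invFun := fun z => (z.2 - z.1, z.1)
      left_inv := fun z => by ext <;> simp
      right_inv := fun z => by ext <;> simp }
  rw [← e.hasSum_iff] at key
  refine key.prod_fiberwise fun μ => ?_
  simp only [Function.comp]
  set m : ℤ := ((i : ℕ) : ℤ) - ((k : ℕ) : ℤ) - N * μ with hm
  set c : ℝ := (((i : ℕ) : ℝ) + ((k : ℕ) : ℝ) + N * μ) / (2 * N) with hc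
  set S : ℝ × ℝ → ℂ := fun x => (s x : ℂ) with hSdef
  set g : ℝ × ℝ → ℂ := fun x => f x * (Real.sqrt (s x) : ℂ) with hgdef
  set Φ : ℝ → ℂ := fun q => (Real.sqrt (2 * N) : ℂ) * J S 0 g (tf N m (q - c)) q m with hΦ
  have hΦi : Integrable Φ := (J_int hS hg hσ (fun x => by simpa [hSdef] using hσs x) hN' m
    (a := fun u => u) continuous_id (d := c)).const_mul _
  have hΦs := hΦi.hasSum_intervalIntegral_comp_add_int
  have hΦK : ∫ q, Φ q = K S g N c m := by
    rw [← integral_add_left_eq_self Φ c]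
    unfold K
    simp only [hΦ, add_sub_cancel_left]
  rw [hΦK, ← (Equiv.neg ℤ).hasSum_iff] at hΦs
  convert hΦs using 1
  funext ν
  simp only [Function.comp, Equiv.neg_apply]
  have h1 : e (μ, ν) = (ν, ν + μ) := rfl
  rw [h1]
  have hi := hFi (ν, ν + μ)
  unfold Q at hi ⊢
  rw [Measure.volume_eq_prod] at hi ⊢
  rw [setIntegral_prod _ hi, integral_Ico_eq_integral_Ioc, ← intervalIntegral.integral_of_le zero_le_one]
  refine intervalIntegral.integral_congr fun q _ => ?_
  rw [integral_Ico_eq_integral_Ioc, ← intervalIntegral.integral_of_le zero_le_one]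
  simp only [hΦ]
  rw [J_per hS hg]
  unfold J
  rw [← intervalIntegral.integral_const_mul]
  refine intervalIntegral.integral_congr fun p _ => ?_
  simp only [hF]
  rw [planeCS_mul hN q p hpos f i k ν μ]
  push_cast
  rw [show q + -(ν : ℝ) - c = q - ν - c by ring]


end AW

/-- Two anti-Wick quantizations with smooth positive periodic squeezing
functions `s₁, s₂` are `O(N⁻¹)`-close in operator norm on any smooth periodic observable. -/
theorem antiWick_quantizations_equivalent
    (s₁ s₂ : ℝ × ℝ → ℝ) (f : ℝ × ℝ → ℂ)
    (hs₁ : ContDiff ℝ (⊤ : ℕ∞) s₁) (hs₂ : ContDiff ℝ (⊤ : ℕ∞) s₂) (hf : ContDiff ℝ (⊤ : ℕ∞) f)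
    (hs₁pos : ∀ x, 0 < s₁ x) (hs₂pos : ∀ x, 0 < s₂ x)
    (hs₁per : ∀ x : ℝ × ℝ, s₁ (x.1 + 1, x.2) = s₁ x ∧ s₁ (x.1, x.2 + 1) = s₁ x)
    (hs₂per : ∀ x : ℝ × ℝ, s₂ (x.1 + 1, x.2) = s₂ x ∧ s₂ (x.1, x.2 + 1) = s₂ x)
    (hfper : ∀ x : ℝ × ℝ, f (x.1 + 1, x.2) = f x ∧ f (x.1, x.2 + 1) = f x) :
    ∃ C : ℝ, 0 < C ∧ ∀ N : ℕ, 1 ≤ N → ‖opAW N s₁ f - opAW N s₂ f‖ ≤ C / N := by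
  have hf' : AW.SP f := ⟨hf, fun q p => (hfper (q, p)).1, fun q p => (hfper (q, p)).2⟩
  obtain ⟨C1, hC1, h1⟩ := AW.K_diff hs₁ hs₁pos hs₁per hf'
  obtain ⟨C2, hC2, h2⟩ := AW.K_diff hs₂ hs₂pos hs₂per hf'
  have hW : 0 ≤ ∑' m, AW.w m := tsum_nonneg AW.w_nonneg
  refine ⟨(C1 + C2) * ∑' m, AW.w m + 1, by positivity, fun N hN => ?_⟩
  have hN0 : 0 < N := hN
  have hN' : (0 : ℝ) < N := by exact_mod_cast hN0
  haveI : NeZero N := ⟨hN0.ne'⟩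
  have hD : 0 ≤ (C1 + C2) / N := by positivity
  have main : ‖opAW N s₁ f - opAW N s₂ f‖ ≤ (C1 + C2) / N * ∑' m, AW.w m := by
    refine AW.schur_final _ _ hD fun i k => ?_
    have e1 := AW.op_hasSum hN0 hs₁ hs₁pos hs₁per hf' i k
    have e2 := AW.op_hasSum hN0 hs₂ hs₂pos hs₂per hf' i k
    have e := e1.sub e2
    rw [ContinuousLinearMap.sub_apply, PiLp.sub_apply, ← tsum_mul_left, ← e.tsum_eq]
    refine tsum_of_norm_bounded ((AW.w_row_summable N _).mul_left _).hasSum fun μ => ?_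
    set m : ℤ := ((i : ℕ) : ℤ) - ((k : ℕ) : ℤ) - N * μ with hm
    set c : ℝ := (((i : ℕ) : ℝ) + ((k : ℕ) : ℝ) + N * μ) / (2 * N) with hc
    have a1 := h1 c m N hN'
    have a2 := h2 c m N hN'
    have hp : (0 : ℝ) < 1 + (m : ℝ) ^ 2 := by positivity
    have tri : ∀ A B X : ℂ, ‖A - B‖ ≤ ‖A - X‖ + ‖B - X‖ := fun A B X => by
      rw [show A - B = (A - X) - (B - X) by ring]; exact norm_sub_le _ _
    refine (tri _ _ (AW.J (fun _ => 0) 0 f 0 c m)).trans ?_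
    unfold AW.w
    rw [mul_one_div, le_div_iff₀ hp, add_div]
    linarith
  refine main.trans ?_
  rw [div_mul_eq_mul_div]
  gcongr
  linarith
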